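/- For all sufficiently large N the following holds. Let A ⊆ [N] be a nonempty set with no non-zero square differences, let α = |A|/N, and let g = 1_A − α·1_{[N]}. Define W : ℤ → ℝ by W(n) = 2m/N^{1/2} if n = m² for some positive integer m with m² ≤ N, and W(n) = 0 otherwise. Then ∫₀¹ |ĝ(γ)| · |1̂_A(γ)| · |Ŵ(γ)| dγ ≥ (1/8)·α·|A|·N^{1/2}. -/

import Mathlib

/-- `A` has no non-zero square differences. -/
def NoSquareDiff (A : Finset ℕ) : Prop :=
  ∀ a ∈ A, ∀ b ∈ A, ∀ n : ℕ, 0 < n → a ≠ b + n ^ 2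

/-- `e(x) = e^{2πix}`. -/
noncomputable def eu (x : ℝ) : ℂ := Complex.exp (2 * Real.pi * Complex.I * x)

/-- The Fourier transform of the indicator of `A`: `1̂_A(γ) = ∑_{a ∈ A} e(aγ)`. -/
noncomputable def hatInd (A : Finset ℕ) (γ : ℝ) : ℂ := ∑ a ∈ A, eu (a * γ)

/-- The Fourier transform `Ŵ(γ) = ∑_n W(n) e(nγ)` of the weight
`W(n) = 2m/√N` if `n = m² ≤ N` (`m ≥ 1`), `W(n) = 0` otherwise. -/
noncomputable def hatW (N : ℕ) (γ : ℝ) : ℂ :=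
  ∑ m ∈ Finset.Icc 1 (Nat.sqrt N), ((2 * (m : ℝ) / Real.sqrt N : ℝ) : ℂ) * eu ((m : ℝ) ^ 2 * γ)

theorem eu_add (x y : ℝ) : eu (x + y) = eu x * eu y := by
  simp only [eu, ← Complex.exp_add]
  congr 1
  push_cast
  ring

theorem star_eu (x : ℝ) : star (eu x) = eu (-x) := by
  simp [eu, ← Complex.exp_conj, Complex.conj_ofNat]

theorem continuous_eu : Continuous eu := by
  unfold eu
  fun_prop

theorem continuous_hatInd (A : Finset ℕ) : Continuous (hatInd A) :=
  continuous_finsetSum _ fun _ _ => continuous_eu.comp (by fun_prop)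

theorem continuous_hatW (N : ℕ) : Continuous (hatW N) :=
  continuous_finsetSum _ fun _ _ => continuous_const.mul (continuous_eu.comp (by fun_prop))

theorem star_hatInd (A : Finset ℕ) (γ : ℝ) : star (hatInd A γ) = hatInd A (-γ) := by
  simp only [hatInd, star_sum, star_eu, mul_neg]

theorem star_hatW (N : ℕ) (γ : ℝ) : star (hatW N γ) = hatW N (-γ) := by
  simp only [hatW, star_sum, star_mul', star_eu, mul_neg]
  simp

/-- Orthogonality of the characters `γ ↦ e(kγ)` on `[0, 1]`. -/
theorem integral_eu_int_mul (k : ℤ) :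
    ∫ γ in (0 : ℝ)..1, eu (k * γ) = if k = 0 then 1 else 0 := by
  split_ifs with hk
  · simp [hk, eu]
  · have hc : (2 * Real.pi * Complex.I * k : ℂ) ≠ 0 := by
      simp [Real.pi_ne_zero, Complex.I_ne_zero, hk]
    have h : ∀ γ : ℝ, eu (k * γ) = Complex.exp ((2 * Real.pi * Complex.I * k : ℂ) * γ) := by
      intro γ
      simp only [eu]
      congr 1
      push_cast
      ring
    simp only [h]
    rw [integral_exp_mul_complex hc]
    have h1 : Complex.exp (2 * Real.pi * Complex.I * k) = 1 := by
      rw [Complex.exp_eq_one_iff]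
      exact ⟨k, by ring⟩
    simp [h1]

/-- The weighted number of solutions of `x = y + m²` with `x ∈ X`, `y ∈ Y`. -/
noncomputable def weightedCount (N : ℕ) (X Y : Finset ℕ) : ℝ :=
  ∑ x ∈ X, ∑ y ∈ Y, ∑ m ∈ Finset.Icc 1 (Nat.sqrt N),
    2 * (m : ℝ) / Real.sqrt N * if x = y + m ^ 2 then 1 else 0

theorem integral_hatInd_mul_hatInd_mul_hatW (N : ℕ) (X Y : Finset ℕ) :
    ∫ γ in (0 : ℝ)..1, hatInd X γ * hatInd Y (-γ) * hatW N (-γ) = weightedCount N X Y := by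
  have hexp : ∀ γ : ℝ, hatInd X γ * hatInd Y (-γ) * hatW N (-γ) =
      ∑ x ∈ X, ∑ y ∈ Y, ∑ m ∈ Finset.Icc 1 (Nat.sqrt N),
        ((2 * (m : ℝ) / Real.sqrt N : ℝ) : ℂ) * eu (((x - y - m ^ 2 : ℤ) : ℝ) * γ) := by
    intro γ
    simp only [hatInd, hatW]
    rw [Finset.sum_mul_sum, Finset.sum_mul]
    refine Finset.sum_congr rfl fun x _ => ?_
    rw [Finset.sum_mul]
    refine Finset.sum_congr rfl fun y _ => ?_
    rw [Finset.mul_sum]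
    refine Finset.sum_congr rfl fun m _ => ?_
    have : ((x - y - m ^ 2 : ℤ) : ℝ) * γ = x * γ + y * (-γ) + (m : ℝ) ^ 2 * (-γ) := by
      push_cast
      ring
    rw [this, eu_add, eu_add]
    ring
  have hcont : ∀ (c : ℂ) (k : ℤ), Continuous fun γ : ℝ => c * eu ((k : ℝ) * γ) := fun c k =>
    continuous_const.mul (continuous_eu.comp (by fun_prop))
  simp only [hexp]
  rw [intervalIntegral.integral_finsetSum fun x _ => (continuous_finsetSum _ fun y _ =>
    continuous_finsetSum _ fun m _ => hcont _ _).intervalIntegrable _ _]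
  simp only [weightedCount, Complex.ofReal_sum]
  refine Finset.sum_congr rfl fun x _ => ?_
  rw [intervalIntegral.integral_finsetSum fun y _ => (continuous_finsetSum _ fun m _ =>
    hcont _ _).intervalIntegrable _ _]
  refine Finset.sum_congr rfl fun y _ => ?_
  rw [intervalIntegral.integral_finsetSum fun m _ => (hcont _ _).intervalIntegrable _ _]
  refine Finset.sum_congr rfl fun m _ => ?_
  rw [intervalIntegral.integral_const_mul, integral_eu_int_mul, Complex.ofReal_mul]
  congr 1
  have : ((x : ℤ) - y - (m : ℤ) ^ 2 = 0) ↔ x = y + m ^ 2 := by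
    zify
    constructor <;> intro h <;> linarith
  simp only [this]
  split_ifs <;> simp

theorem NoSquareDiff.weightedCount_eq_zero {A : Finset ℕ} (hA : NoSquareDiff A) (N : ℕ) :
    weightedCount N A A = 0 := by
  refine Finset.sum_eq_zero fun x hx => Finset.sum_eq_zero fun y hy =>
    Finset.sum_eq_zero fun m hm => ?_
  rw [if_neg (hA x hx y hy m (Finset.mem_Icc.1 hm).1), mul_zero]

theorem sum_Icc_two_mul (s : ℕ) : ∑ m ∈ Finset.Icc 1 s, 2 * (m : ℝ) = s * (s + 1) := by
  induction s with
  | zero => simp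
  | succ s ih =>
    rw [Finset.sum_Icc_succ_top (by omega), ih]
    push_cast
    ring

/-- The squares up to `k` carry weight at least `(k - √N) / √N`. -/
theorem le_sum_weight {N k : ℕ} (hk : k ≤ N) :
    ((k : ℝ) - Real.sqrt N) / Real.sqrt N ≤
      ∑ m ∈ Finset.Icc 1 (Nat.sqrt k), 2 * (m : ℝ) / Real.sqrt N := by
  rw [← Finset.sum_div, sum_Icc_two_mul]
  gcongr
  have h1 : (Nat.sqrt k : ℝ) ≤ Real.sqrt N :=
    Real.nat_sqrt_le_real_sqrt.trans (Real.sqrt_le_sqrt (by exact_mod_cast hk))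
  have h2 : (k : ℝ) ≤ Nat.sqrt k * Nat.sqrt k + Nat.sqrt k + Nat.sqrt k := by
    exact_mod_cast Nat.sqrt_le_add k
  linarith

/-- If every `m² ≤ k` admits `z ∈ Z` with `P z m`, the corresponding weighted count is large. -/
theorem le_sum_sum_weight {N k : ℕ} (hk : k ≤ N) (Z : Finset ℕ) (P : ℕ → ℕ → Prop)
    [∀ z m, Decidable (P z m)] (h : ∀ m, 1 ≤ m → m ^ 2 ≤ k → ∃ z ∈ Z, P z m) :
    ((k : ℝ) - Real.sqrt N) / Real.sqrt N ≤
      ∑ z ∈ Z, ∑ m ∈ Finset.Icc 1 (Nat.sqrt N),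
        2 * (m : ℝ) / Real.sqrt N * if P z m then 1 else 0 := by
  rw [Finset.sum_comm]
  refine (le_sum_weight hk).trans ?_
  have hnonneg : ∀ z m : ℕ, (0 : ℝ) ≤ 2 * (m : ℝ) / Real.sqrt N * if P z m then 1 else 0 := by
    intro z m
    split_ifs <;> positivity
  refine (Finset.sum_le_sum fun m hm => ?_).trans (Finset.sum_le_sum_of_subset_of_nonneg
    (Finset.Icc_subset_Icc_right (Nat.sqrt_le_sqrt hk)) fun m _ _ =>
      Finset.sum_nonneg fun z _ => hnonneg z m)
  obtain ⟨hm1, hm2⟩ := Finset.mem_Icc.1 hm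
  obtain ⟨z, hz, hP⟩ := h m hm1 (Nat.le_sqrt'.1 hm2)
  refine le_trans ?_ (Finset.single_le_sum (fun z _ => hnonneg z m) hz)
  rw [if_pos hP, mul_one]

theorem le_weightedCount_add_weightedCount {N : ℕ} {A : Finset ℕ} (hA : A ⊆ Finset.Icc 1 N) :
    A.card * (((N : ℝ) - 1 - 2 * Real.sqrt N) / Real.sqrt N) ≤
      weightedCount N (Finset.Icc 1 N) A + weightedCount N A (Finset.Icc 1 N) := by
  unfold weightedCount
  rw [Finset.sum_comm (s := Finset.Icc 1 N), ← Finset.sum_add_distrib, ← nsmul_eq_mul]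
  refine Finset.card_nsmul_le_sum _ _ _ fun a ha => ?_
  obtain ⟨ha1, haN⟩ := Finset.mem_Icc.1 (hA ha)
  have h1 := le_sum_sum_weight (N := N) (k := N - a) (by omega) (Finset.Icc 1 N)
    (fun x m => x = a + m ^ 2)
    fun m _ hm => ⟨a + m ^ 2, Finset.mem_Icc.2 (by omega), rfl⟩
  have h2 := le_sum_sum_weight (N := N) (k := a - 1) (by omega) (Finset.Icc 1 N)
    (fun y m => a = y + m ^ 2)
    fun m _ hm => ⟨a - m ^ 2, Finset.mem_Icc.2 (by omega), by omega⟩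
  refine le_trans (le_of_eq ?_) (add_le_add h1 h2)
  rw [← add_div, Nat.cast_sub haN, Nat.cast_sub ha1]
  congr 1
  push_cast
  ring

theorem intervalIntegrable_hatInd_mul (N : ℕ) (X Y : Finset ℕ) :
    IntervalIntegrable (fun γ => hatInd X γ * hatInd Y (-γ) * hatW N (-γ))
      MeasureTheory.volume 0 1 := by
  have hX := continuous_hatInd X
  have hY := continuous_hatInd Y
  have hW := continuous_hatW N
  exact Continuous.intervalIntegrable (by fun_prop) _ _

/-- Since `A` has no square differences, the `L¹` norm of the integrand representing
`weightedCount N A A - α * weightedCount N X Y` bounds the second term. -/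
theorem NoSquareDiff.mul_weightedCount_le {A : Finset ℕ} (hA : NoSquareDiff A) (N : ℕ)
    (X Y : Finset ℕ) (α : ℝ) :
    α * weightedCount N X Y ≤ ∫ γ in (0 : ℝ)..1,
      ‖hatInd A γ * hatInd A (-γ) * hatW N (-γ) -
        (α : ℂ) * (hatInd X γ * hatInd Y (-γ) * hatW N (-γ))‖ := by
  refine le_trans ?_ (intervalIntegral.norm_integral_le_integral_norm zero_le_one)
  rw [intervalIntegral.integral_sub (intervalIntegrable_hatInd_mul N A A)
    ((intervalIntegrable_hatInd_mul N X Y).const_mul _), intervalIntegral.integral_const_mul,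
    integral_hatInd_mul_hatInd_mul_hatW, integral_hatInd_mul_hatInd_mul_hatW,
    hA.weightedCount_eq_zero, Complex.ofReal_zero, zero_sub, norm_neg, ← Complex.ofReal_mul,
    Complex.norm_real]
  exact le_abs_self _

theorem statement_14 :
    ∃ N₀ : ℕ, ∀ N : ℕ, N₀ ≤ N →
      ∀ A : Finset ℕ, A.Nonempty → A ⊆ Finset.Icc 1 N → NoSquareDiff A →
      ∀ α : ℝ, α = (A.card : ℝ) / N →
        (1 / 8) * α * A.card * Real.sqrt N ≤
          ∫ γ in (0 : ℝ)..1,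
            ‖hatInd A γ - (α : ℂ) * hatInd (Finset.Icc 1 N) γ‖ * ‖hatInd A γ‖ * ‖hatW N γ‖ := by
  refine ⟨16, fun N hN A _ hAN hA α hα => ?_⟩
  have hα0 : 0 ≤ α := by
    rw [hα]
    positivity
  have hind : ∀ (X : Finset ℕ) (γ : ℝ), ‖hatInd X (-γ)‖ = ‖hatInd X γ‖ := fun X γ => by
    rw [← star_hatInd, norm_star]
  have hW : ∀ γ : ℝ, ‖hatW N (-γ)‖ = ‖hatW N γ‖ := fun γ => by rw [← star_hatW, norm_star]
  have hbal : ∀ γ : ℝ, ‖hatInd A (-γ) - (α : ℂ) * hatInd (Finset.Icc 1 N) (-γ)‖ =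
      ‖hatInd A γ - (α : ℂ) * hatInd (Finset.Icc 1 N) γ‖ := fun γ => by
    rw [← norm_star (hatInd A γ - _), star_sub, star_mul', star_hatInd, star_hatInd]
    simp
  have h1 := hA.mul_weightedCount_le N (Finset.Icc 1 N) A α
  have h2 := hA.mul_weightedCount_le N A (Finset.Icc 1 N) α
  have e1 : ∀ γ : ℝ, ‖hatInd A γ * hatInd A (-γ) * hatW N (-γ) -
      (α : ℂ) * (hatInd (Finset.Icc 1 N) γ * hatInd A (-γ) * hatW N (-γ))‖ =
      ‖hatInd A γ - (α : ℂ) * hatInd (Finset.Icc 1 N) γ‖ * ‖hatInd A γ‖ * ‖hatW N γ‖ := by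
    intro γ
    rw [← hW, ← hind A γ, ← norm_mul, ← norm_mul]
    congr 1
    ring
  have e2 : ∀ γ : ℝ, ‖hatInd A γ * hatInd A (-γ) * hatW N (-γ) -
      (α : ℂ) * (hatInd A γ * hatInd (Finset.Icc 1 N) (-γ) * hatW N (-γ))‖ =
      ‖hatInd A γ - (α : ℂ) * hatInd (Finset.Icc 1 N) γ‖ * ‖hatInd A γ‖ * ‖hatW N γ‖ := by
    intro γ
    rw [← hW, ← hbal, ← norm_mul, ← norm_mul]
    congr 1
    ring
  simp only [e1] at h1
  simp only [e2] at h2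
  have h3 := mul_le_mul_of_nonneg_left (le_weightedCount_add_weightedCount hAN) hα0
  have hs : 4 ≤ Real.sqrt N := Real.le_sqrt_of_sq_le (by norm_num; exact_mod_cast hN)
  have hsq : Real.sqrt N * Real.sqrt N = N := Real.mul_self_sqrt (Nat.cast_nonneg N)
  have h4 : Real.sqrt N / 4 ≤ ((N : ℝ) - 1 - 2 * Real.sqrt N) / Real.sqrt N := by
    rw [le_div_iff₀ (by linarith)]
    nlinarith
  have h5 := mul_le_mul_of_nonneg_left h4 (mul_nonneg hα0 (Nat.cast_nonneg (α := ℝ) A.card))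
  linarith
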